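/- arXiv:1311.6695 — 2 statements merged into one kernel-verified Lean document; each statement's English description precedes it below -/
import Mathlib

section
/- Let ψ ∈ K̄(z) be a rational function of good reduction with ψ(0) = 0 and |ψ'(0)|_v < 1 (so 0 is an attracting fixed point). Then ψ has no other fixed point in the open unit disk: there is no y ∈ K̄ with 0 < |y|_v < 1 and ψ(y) = y. -/
open Polynomial

noncomputable section

namespace PaperPGR

variable {K : Type*} [Field K]

/-- The ring of integers `{x : K | v x ≤ 1}` of a non-archimedean absolute value. -/
def vints (v : AbsoluteValue K ℝ) (hna : IsNonarchimedean (⇑v)) : Subring K where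
  carrier := {x : K | v x ≤ 1}
  mul_mem' := by
    intro a b ha hb
    simp only [Set.mem_setOf_eq, map_mul] at *
    nlinarith [v.nonneg a, v.nonneg b]
  one_mem' := by simp [Set.mem_setOf_eq]
  add_mem' := by
    intro a b ha hb
    exact le_trans (hna a b) (max_le ha hb)
  zero_mem' := by simp [Set.mem_setOf_eq]
  neg_mem' := by
    intro a ha
    simpa [Set.mem_setOf_eq] using ha

/-- The maximal ideal `{x : K | v x < 1}` of the ring of integers. -/
def vmax (v : AbsoluteValue K ℝ) (hna : IsNonarchimedean (⇑v)) : Ideal (vints v hna) where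
  carrier := {x | v (x : K) < 1}
  add_mem' := by
    intro a b ha hb
    simp only [Set.mem_setOf_eq] at *
    calc v ((a : K) + (b : K)) ≤ max (v (a : K)) (v (b : K)) := hna _ _
      _ < 1 := max_lt ha hb
  zero_mem' := by simp [Set.mem_setOf_eq]
  smul_mem' := by
    intro c x hx
    simp only [Set.mem_setOf_eq, smul_eq_mul] at *
    have : v ((c : K) * (x : K)) = v (c : K) * v (x : K) := map_mul v _ _
    have hc : v (c : K) ≤ 1 := c.2
    have := v.nonneg (c : K)
    have := v.nonneg (x : K)
    calc v (((c * x : vints v hna) : K)) = v ((c : K) * (x : K)) := by norm_cast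
      _ = v (c : K) * v (x : K) := map_mul v _ _
      _ < 1 := by nlinarith

/-- View a polynomial with integral coefficients as a polynomial over `K`. -/
def liftp (v : AbsoluteValue K ℝ) (hna : IsNonarchimedean (⇑v))
    (f : Polynomial (vints v hna)) : Polynomial K :=
  f.map (vints v hna).subtype

/-- The coefficientwise reduction of `f ∈ O[z]` modulo the maximal ideal. -/
def redp (v : AbsoluteValue K ℝ) (hna : IsNonarchimedean (⇑v))
    (f : Polynomial (vints v hna)) : Polynomial ((vints v hna) ⧸ (vmax v hna)) :=
  f.map (Ideal.Quotient.mk (vmax v hna))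

/-- `(f, g)` is a normalized representation of a rational function:  `f, g ∈ O[z]` are
coprime (over `K`) and at least one coefficient of `f` or `g` has absolute value `1`. -/
def GoodRep (v : AbsoluteValue K ℝ) (hna : IsNonarchimedean (⇑v))
    (f g : Polynomial (vints v hna)) : Prop :=
  IsCoprime (liftp v hna f) (liftp v hna g) ∧
    ∃ n : ℕ, v ((f.coeff n : K)) = 1 ∨ v ((g.coeff n : K)) = 1

/-- The rational function `f/g` has good reduction: the reductions of `f` and `g` are coprime
in `k̄[z]` and the reduced degree equals `max (deg f) (deg g)`. -/
def GoodRed (v : AbsoluteValue K ℝ) (hna : IsNonarchimedean (⇑v))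
    (f g : Polynomial (vints v hna)) : Prop :=
  IsCoprime (redp v hna f) (redp v hna g) ∧
    max (redp v hna f).natDegree (redp v hna g).natDegree = max f.natDegree g.natDegree

open Classical in
/-- The self-map of `P¹(K) = K ∪ {∞}` (encoded as `Option K`, with `none = ∞`) induced by the
rational function `f/g` (for `f, g` coprime). -/
def rmap (f g : Polynomial K) : Option K → Option K
  | none =>
      if g.natDegree < f.natDegree then none
      else some (f.coeff g.natDegree / g.leadingCoeff)
  | some x => if g.eval x = 0 then none else some (f.eval x / g.eval x)

/-- The multiplier of the rational function `f/g` at a point of `P¹(K)`; at a point of `K` it is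
the value of the derivative `(f/g)' = (f'g - fg')/g²`, and at `∞` it is `ψ'(0)` for
`ψ(z) = 1/φ(1/z)`, computed via the reflections of `f` and `g` at `d = max (deg f) (deg g)`. -/
def multiplier (f g : Polynomial K) : Option K → K
  | some x => (derivative f * g - f * derivative g).eval x / g.eval x ^ 2
  | none =>
      (derivative (Polynomial.reflect (max f.natDegree g.natDegree) g) *
            Polynomial.reflect (max f.natDegree g.natDegree) f -
          Polynomial.reflect (max f.natDegree g.natDegree) g *
            derivative (Polynomial.reflect (max f.natDegree g.natDegree) f)).eval 0 /
        ((Polynomial.reflect (max f.natDegree g.natDegree) f).eval 0) ^ 2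

/-- The Möbius transformation `z ↦ (az+b)/(cz+d)` as a self-map of `P¹(K)`. -/
def mob (a b c d : K) : Option K → Option K :=
  rmap (C a * X + C b) (C c * X + C d)

/-- The rational function `f/g` (with `f, g` coprime) has potentially good reduction:
some Möbius conjugate `h ∘ (f/g) ∘ h⁻¹` admits a normalized representation `F/G` with
good reduction.  The conjugation relation is expressed as `ψ ∘ h = h ∘ φ` on `P¹(K)`. -/
def PotGoodRed (v : AbsoluteValue K ℝ) (hna : IsNonarchimedean (⇑v))
    (f g : Polynomial K) : Prop :=
  ∃ a b c d : K, a * d - b * c ≠ 0 ∧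
    ∃ F G : Polynomial (vints v hna), GoodRep v hna F G ∧ GoodRed v hna F G ∧
      rmap (liftp v hna F) (liftp v hna G) ∘ mob a b c d = mob a b c d ∘ rmap f g

/-!
Let `x` be a fixed point of `ψ = f / g`, with `W = f' g - f g'` the numerator of `ψ'`. Expanding
`f(y) g(x) - f(x) g(y)` to first order at `y = x` gives `(y - x) (W(x) + (y - x) c)` with `c`
integral. If `y ≠ x` is also fixed, the left side is `(y - x) g(x) g(y)`, so cancelling `y - x`
yields `g(x) g(y) = W(x) + (y - x) c`. When `y ≡ x` and `W(x) ≡ 0` modulo the maximal ideal, this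
says `g(x)² ≡ 0`, so `f(x) = x g(x)` and `g(x)` both reduce to `0`, contradicting the coprimality
of the reductions.
-/

section CommRing

variable {R : Type*} [CommRing R]

theorem exists_eval_mul_eval_sub_eq_wronskian (f g : R[X]) (x y : R) :
    ∃ c, f.eval y * g.eval x - f.eval x * g.eval y =
      (y - x) * ((wronskian g f).eval x + (y - x) * c) := by
  obtain ⟨c, hc⟩ := (f * C (g.eval x) - C (f.eval x) * g).binomExpansion x (y - x)
  refine ⟨c, ?_⟩
  simp only [add_sub_cancel, eval_sub, eval_mul, eval_C, derivative_sub, derivative_mul,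
    derivative_C, eval_add, eval_zero] at hc
  simp only [wronskian, eval_sub, eval_mul]
  linear_combination hc

theorem eval_notMem_of_isCoprime_map_mk {I : Ideal R} (hI : I ≠ ⊤) {f g : R[X]}
    (hcop : IsCoprime (f.map (Ideal.Quotient.mk I)) (g.map (Ideal.Quotient.mk I))) {x : R}
    (hf : f.eval x ∈ I) : g.eval x ∉ I := by
  intro hg
  have := Ideal.Quotient.nontrivial_iff.mpr hI
  have h := hcop.map (evalRingHom (Ideal.Quotient.mk I x))
  rw [coe_evalRingHom, eval_map_apply, eval_map_apply, Ideal.Quotient.eq_zero_iff_mem.mpr hf,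
    Ideal.Quotient.eq_zero_iff_mem.mpr hg] at h
  exact not_isCoprime_zero_zero h

theorem eq_of_eval_eq_mul_eval_of_wronskian_mem [IsDomain R] {P : Ideal R} [P.IsPrime] {f g : R[X]}
    {x y : R} (hfx : f.eval x = x * g.eval x) (hfy : f.eval y = y * g.eval y)
    (hgx : g.eval x ∉ P) (hw : (wronskian g f).eval x ∈ P) (hxy : y - x ∈ P) : y = x := by
  by_contra hne
  obtain ⟨c, hc⟩ := exists_eval_mul_eval_sub_eq_wronskian f g x y
  have hgg : g.eval y * g.eval x = (wronskian g f).eval x + (y - x) * c := by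
    apply mul_left_cancel₀ (sub_ne_zero.mpr hne)
    rw [← hc, hfx, hfy]
    ring
  have hgy : g.eval y ∈ P :=
    (‹P.IsPrime›.mem_or_mem (hgg ▸ P.add_mem hw (P.mul_mem_right c hxy))).resolve_right hgx
  have hsub : g.eval y - g.eval x ∈ P := P.mem_of_dvd (sub_dvd_eval_sub y x g) hxy
  exact hgx ((P.sub_mem_iff_right hgy).mp hsub)

end CommRing

section Rational

variable {v : AbsoluteValue K ℝ} {hna : IsNonarchimedean (⇑v)}

theorem rmap_some_eq_some_iff {f g : K[X]} {x z : K} :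
    rmap f g (some x) = some z ↔ g.eval x ≠ 0 ∧ f.eval x = z * g.eval x := by
  by_cases hg : g.eval x = 0 <;> simp [rmap, hg, div_eq_iff]

theorem multiplier_some (f g : K[X]) (x : K) :
    multiplier f g (some x) = (wronskian g f).eval x / g.eval x ^ 2 := by
  simp only [multiplier, wronskian, mul_comm]

theorem mem_vmax_iff {x : vints v hna} : x ∈ vmax v hna ↔ v x < 1 := Iff.rfl

instance vmax_isPrime : (vmax v hna).IsPrime := by
  refine Ideal.isPrime_iff.mpr ⟨?_, ?_⟩
  · rw [Ideal.ne_top_iff_one, mem_vmax_iff]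
    simp
  · intro x y hxy
    contrapose! hxy
    simp only [mem_vmax_iff, not_lt] at hxy ⊢
    simpa using one_le_mul_of_one_le_of_one_le hxy.1 hxy.2

theorem eval_liftp (f : (vints v hna)[X]) (x : vints v hna) :
    (liftp v hna f).eval (x : K) = f.eval x :=
  eval_map_apply (vints v hna).subtype x

theorem wronskian_liftp (f g : (vints v hna)[X]) :
    wronskian (liftp v hna f) (liftp v hna g) = liftp v hna (wronskian f g) := by
  simp [wronskian, liftp, derivative_map]

theorem rmap_liftp_eq_some_iff {f g : (vints v hna)[X]} {x z : vints v hna} :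
    rmap (liftp v hna f) (liftp v hna g) (some (x : K)) = some (z : K) ↔
      g.eval x ≠ 0 ∧ f.eval x = z * g.eval x := by
  simp only [rmap_some_eq_some_iff, eval_liftp]
  norm_cast

theorem eval_wronskian_mem_vmax {f g : (vints v hna)[X]} {x : vints v hna} (hg : g.eval x ≠ 0)
    (h : v (multiplier (liftp v hna f) (liftp v hna g) (some (x : K))) < 1) :
    (wronskian g f).eval x ∈ vmax v hna := by
  have hpos : 0 < v (↑(g.eval x)) := v.pos (Subtype.coe_ne_coe.mpr hg)
  rw [multiplier_some, wronskian_liftp, eval_liftp, eval_liftp, map_div₀, map_pow,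
    div_lt_one (pow_pos hpos 2)] at h
  exact h.trans_le (pow_le_one₀ hpos.le (g.eval x).2)

end Rational

theorem good_reduction_attracting_unique_fixed_in_disk_general {K : Type*} [Field K]
    (v : AbsoluteValue K ℝ) (hna : IsNonarchimedean (⇑v)) {f g : Polynomial (vints v hna)}
    (hcop : IsCoprime (redp v hna f) (redp v hna g)) {x y : K} (hx : v x ≤ 1)
    (hfix : rmap (liftp v hna f) (liftp v hna g) (some x) = some x)
    (hattr : v (multiplier (liftp v hna f) (liftp v hna g) (some x)) < 1)
    (hxy : v (y - x) < 1)
    (hy : rmap (liftp v hna f) (liftp v hna g) (some y) = some y) : y = x := by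
  obtain ⟨x, rfl⟩ : ∃ a : vints v hna, (a : K) = x := ⟨⟨x, hx⟩, rfl⟩
  have hy_int : v y ≤ 1 := by
    have hadd : v (y - x + x) ≤ 1 := (vints v hna).add_mem hxy.le x.2
    rwa [sub_add_cancel] at hadd
  obtain ⟨y, rfl⟩ : ∃ b : vints v hna, (b : K) = y := ⟨⟨y, hy_int⟩, rfl⟩
  obtain ⟨hgx, hfx⟩ := rmap_liftp_eq_some_iff.mp hfix
  obtain ⟨-, hfy⟩ := rmap_liftp_eq_some_iff.mp hy
  have hgx_unit : g.eval x ∉ vmax v hna := fun hmem =>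
    eval_notMem_of_isCoprime_map_mk vmax_isPrime.ne_top hcop
      (hfx ▸ Ideal.mul_mem_left _ x hmem) hmem
  exact congrArg Subtype.val <|
    eq_of_eval_eq_mul_eval_of_wronskian_mem hfx hfy hgx_unit (eval_wronskian_mem_vmax hgx hattr) hxy

/-- if `ψ` has good reduction, `ψ(0) = 0`, and `|ψ'(0)|_v < 1` (so `0` is an
attracting fixed point), then `ψ` has no other fixed point in the open unit disk. -/
theorem good_reduction_attracting_unique_fixed_in_disk {K : Type*} [Field K] [IsAlgClosed K]
    (v : AbsoluteValue K ℝ) (hna : IsNonarchimedean (⇑v))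
    (f g : Polynomial (vints v hna))
    (hrep : GoodRep v hna f g) (hgood : GoodRed v hna f g)
    (hfix : rmap (liftp v hna f) (liftp v hna g) (some 0) = some 0)
    (hattr : v (multiplier (liftp v hna f) (liftp v hna g) (some 0)) < 1) :
    ¬ ∃ y : K, 0 < v y ∧ v y < 1 ∧
      rmap (liftp v hna f) (liftp v hna g) (some y) = some y := by
  rintro ⟨y, hy_pos, hy_lt, hy⟩
  exact v.pos_iff.mp hy_pos <| good_reduction_attracting_unique_fixed_in_disk_general v hna
    hgood.1 (by simp) hfix hattr (by simpa using hy_lt) hy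

end PaperPGR
end
end

section
/- Let φ ∈ K̄(z) be a rational function of degree d ≥ 2, and suppose φ has an indifferent fixed point x ∈ K̄ (i.e. φ(x) = x and |φ'(x)|_v = 1). Choose y₁ ∈ K̄ with φ(y₁) = x and y₁ ≠ x, and y₂ ∈ K̄ ∪ {∞} with φ(y₂) = y₁ (such choices exist, and x, y₁, y₂ are pairwise distinct). Let h be the unique Möbius transformation over K̄ with h(x) = 0, h(y₁) = 1, h(y₂) = ∞, and set ψ = h ∘ φ ∘ h⁻¹. Then φ has potentially good reduction if and only if ψ has good reduction. -/
open Polynomial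

noncomputable section

namespace PaperPGR

variable {K : Type*} [Field K]

/-!
A map with good reduction reduces to a self-map of the projective line over the residue field, and
stays so under conjugation by `GL₂(O)`. Conjugate a good model of `φ` so that the fixed point is at
`0`; in homogeneous coordinates `(z : w)` the model is then `(z H : G)` with forms `H`, `G` over
`O`, and the multiplier at `0` is `H(0, 1) / G(0, 1)`. Indifference says that this is a unit, so `0`
is a simple zero of the reduced map. Hence the reductions of `x`, of its second preimage `y₁` (a
zero of `H`) and of `y₂` (a preimage of `y₁`) are pairwise distinct, so the Möbius transformation
taking them to `0`, `1`, `∞` lies in `GL₂(O)` and preserves good reduction. A Möbius transformation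
is determined by three points, so the resulting conjugate is `ψ`.
-/

/-! ### The projective line in homogeneous coordinates -/

open scoped Matrix

section ProjectiveLine

/-- The point of `P¹(K)` with homogeneous coordinates `w`. The junk value at `w = 0` is `∞`. -/
def pt (w : Fin 2 → K) : Option K :=
  open Classical in if w 1 = 0 then none else some (w 0 / w 1)

/-- The standard homogeneous coordinates of a point of `P¹(K)`: `(z : 1)` for `z ∈ K` and
`(1 : 0)` for `∞`. -/
def coords : Option K → Fin 2 → K
  | none => ![1, 0]
  | some z => ![z, 1]

lemma coords_ne_zero : ∀ P : Option K, coords P ≠ 0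
  | none => fun h => one_ne_zero (congrFun h 0)
  | some _ => fun h => one_ne_zero (congrFun h 1)

@[simp]
lemma pt_coords : ∀ P : Option K, pt (coords P) = P
  | none => by simp [pt, coords]
  | some z => by simp [pt, coords]

lemma pt_smul {c : K} (hc : c ≠ 0) (w : Fin 2 → K) : pt (c • w) = pt w := by
  by_cases hw1 : w 1 = 0 <;> simp [pt, hc, hw1, mul_div_mul_left]

lemma exists_smul_coords_pt {w : Fin 2 → K} (hw : w ≠ 0) :
    ∃ c : K, c ≠ 0 ∧ c • coords (pt w) = w := by
  by_cases hw1 : w 1 = 0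
  · refine ⟨w 0, fun hw0 => hw (funext (Fin.forall_fin_two.2 ⟨hw0, hw1⟩)), ?_⟩
    ext i
    fin_cases i <;> simp [pt, coords, hw1]
  · refine ⟨w 1, hw1, ?_⟩
    ext i
    fin_cases i <;> simp [pt, coords, hw1, mul_div_cancel₀]

lemma pt_eq_none_iff {w : Fin 2 → K} : pt w = none ↔ w 1 = 0 := by
  by_cases hw1 : w 1 = 0 <;> simp [pt, hw1]

lemma pt_eq_some_iff {w : Fin 2 → K} {z : K} : pt w = some z ↔ w 1 ≠ 0 ∧ w 0 = z * w 1 := by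
  by_cases hw1 : w 1 = 0 <;> simp [pt, hw1, div_eq_iff]

lemma pt_eq_zero_iff {w : Fin 2 → K} (hw : w ≠ 0) : pt w = some 0 ↔ w 0 = 0 := by
  rw [pt_eq_some_iff, zero_mul, and_iff_right_iff_imp]
  exact fun hw0 hw1 => hw (funext (Fin.forall_fin_two.2 ⟨hw0, hw1⟩))

lemma cross_mul_eq_of_pt_eq {w w' : Fin 2 → K} (hw : w ≠ 0) (hw' : w' ≠ 0) (h : pt w = pt w') :
    w 0 * w' 1 = w' 0 * w 1 := by
  obtain ⟨c, -, hc⟩ := exists_smul_coords_pt hw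
  obtain ⟨c', -, hc'⟩ := exists_smul_coords_pt hw'
  rw [← hc, ← hc', h]
  simp only [Pi.smul_apply, smul_eq_mul]
  ring

/-- The Möbius transformation of `P¹(K)` given by a `2 × 2` matrix. It is only meaningful for
invertible matrices. -/
def mobius (γ : Matrix (Fin 2) (Fin 2) K) (P : Option K) : Option K :=
  pt (γ *ᵥ coords P)

lemma mobius_pt (γ : Matrix (Fin 2) (Fin 2) K) {w : Fin 2 → K} (hw : w ≠ 0) :
    mobius γ (pt w) = pt (γ *ᵥ w) := by
  obtain ⟨c, hc, hcw⟩ := exists_smul_coords_pt hw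
  rw [mobius, ← pt_smul hc, ← Matrix.mulVec_smul, hcw]

lemma mulVec_ne_zero {γ : Matrix (Fin 2) (Fin 2) K} (hγ : γ.det ≠ 0) {w : Fin 2 → K}
    (hw : w ≠ 0) : γ *ᵥ w ≠ 0 :=
  fun h => hw (Matrix.eq_zero_of_mulVec_eq_zero hγ h)

lemma mobius_mul (γ : Matrix (Fin 2) (Fin 2) K) {δ : Matrix (Fin 2) (Fin 2) K} (hδ : δ.det ≠ 0) :
    mobius (γ * δ) = mobius γ ∘ mobius δ := by
  funext P
  change pt ((γ * δ) *ᵥ coords P) = mobius γ (pt (δ *ᵥ coords P))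
  rw [mobius_pt γ (mulVec_ne_zero hδ (coords_ne_zero P)), Matrix.mulVec_mulVec]

lemma mobius_smul_one {c : K} (hc : c ≠ 0) :
    mobius (c • (1 : Matrix (Fin 2) (Fin 2) K)) = id := by
  funext P
  rw [mobius, Matrix.smul_mulVec, Matrix.one_mulVec, pt_smul hc, pt_coords, id]

lemma mobius_adjugate_comp {γ : Matrix (Fin 2) (Fin 2) K} (hγ : γ.det ≠ 0) :
    mobius γ.adjugate ∘ mobius γ = id := by
  rw [← mobius_mul _ hγ, Matrix.adjugate_mul, mobius_smul_one hγ]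

lemma mobius_injective {γ : Matrix (Fin 2) (Fin 2) K} (hγ : γ.det ≠ 0) :
    Function.Injective (mobius γ) :=
  Function.LeftInverse.injective (congrFun (mobius_adjugate_comp hγ))

lemma mobius_eq_id {ε : Matrix (Fin 2) (Fin 2) K} (h0 : mobius ε (some 0) = some 0)
    (h1 : mobius ε (some 1) = some 1) (hinf : mobius ε none = none) : mobius ε = id := by
  simp only [mobius, coords, pt_eq_some_iff, pt_eq_none_iff, Matrix.mulVec_fin_two,
    Matrix.cons_val_zero, Matrix.cons_val_one, mul_zero, mul_one, zero_mul, one_mul, zero_add,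
    add_zero] at h0 h1 hinf
  obtain ⟨h11, h01⟩ := h0
  have h00 : ε 0 0 = ε 1 1 := by simpa [h01, hinf] using h1.2
  have hε : ε = ε 1 1 • 1 := by
    ext i j
    fin_cases i <;> fin_cases j <;> simp [h00, h01, hinf]
  rw [hε, mobius_smul_one h11]

lemma mobius_eq_of_three_points {γ δ : Matrix (Fin 2) (Fin 2) K} (hδ : δ.det ≠ 0)
    {P Q R : Option K} (hγP : mobius γ P = some 0) (hγQ : mobius γ Q = some 1)
    (hγR : mobius γ R = none) (hδP : mobius δ P = some 0) (hδQ : mobius δ Q = some 1)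
    (hδR : mobius δ R = none) : mobius γ = mobius δ := by
  have hδ' : δ.adjugate.det ≠ 0 := by simpa [Matrix.det_adjugate] using hδ
  have hε : mobius (γ * δ.adjugate) ∘ mobius δ = mobius γ := by
    rw [mobius_mul _ hδ', Function.comp_assoc, mobius_adjugate_comp hδ, Function.comp_id]
  rw [← hε, mobius_eq_id, Function.id_comp]
  · rw [← hδP, ← Function.comp_apply (f := mobius _), hε, hγP, hδP]
  · rw [← hδQ, ← Function.comp_apply (f := mobius _), hε, hγQ, hδQ]
  · rw [← hδR, ← Function.comp_apply (f := mobius _), hε, hγR, hδR]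

lemma mob_eq_mobius {a b c d : K} (h : a * d - b * c ≠ 0) : mob a b c d =
    mobius !![a, b; c, d] := by
  funext P
  rcases P with _ | z
  · rcases eq_or_ne c 0 with rfl | hc
    · have ha : a ≠ 0 := by rintro rfl; simp at h
      simp [mob, rmap, mobius, pt, coords, natDegree_linear ha]
    · have hdeg : (C a * X).natDegree ≤ 1 :=
        (natDegree_C_mul_le a X).trans natDegree_X_le
      simp [mob, rmap, mobius, pt, coords, hc, natDegree_linear hc, leadingCoeff_linear hc, hdeg]
  · by_cases hz : c * z + d = 0 <;> simp [mob, rmap, mobius, pt, coords, hz, mul_comm z]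

end ProjectiveLine

/-! ### Pairs of binary forms -/

lemma eval_smul_of_isHomogeneous {R : Type*} [CommSemiring R] {q : MvPolynomial (Fin 2) R} {n : ℕ}
    (hq : q.IsHomogeneous n) (c : R) (w : Fin 2 → R) :
    MvPolynomial.eval (c • w) q = c ^ n * MvPolynomial.eval w q := by
  rw [MvPolynomial.eval_eq', MvPolynomial.eval_eq', Finset.mul_sum]
  refine Finset.sum_congr rfl fun d hd => ?_
  simp only [Pi.smul_apply, smul_eq_mul, mul_pow, Finset.prod_mul_distrib,
    Finset.prod_pow_eq_pow_sum, hq.degree_eq_sum_deg_support hd]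
  rw [← Finset.sum_subset d.support.subset_univ fun i _ hi => Finsupp.notMem_support_iff.1 hi]
  ring

/-- A pair of binary polynomials, thought of as the self-map `w ↦ (Φ 0 w : Φ 1 w)` of the
projective line when both are forms of the same degree. -/
abbrev FormPair (R : Type*) [CommRing R] := Fin 2 → MvPolynomial (Fin 2) R

namespace FormPair

section CommRing

variable {R S : Type*} [CommRing R] [CommRing S]

/-- Both polynomials are forms of degree `n`; this is what makes the pair act on points of `P¹`. -/
def IsHomogeneous (Φ : FormPair R) (n : ℕ) : Prop :=
  ∀ i, (Φ i).IsHomogeneous n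

/-- The value of the pair at a vector of homogeneous coordinates. -/
def eval (Φ : FormPair R) (w : Fin 2 → R) : Fin 2 → R :=
  fun i => MvPolynomial.eval w (Φ i)

/-- Coefficientwise base change: to the fraction field for the generic fibre, to the residue field
for the reduction. -/
def map (φ : R →+* S) (Φ : FormPair R) : FormPair S :=
  fun i => MvPolynomial.map φ (Φ i)

/-- The pair of forms `γ ∘ Φ ∘ adj γ`. For invertible `γ` it represents the conjugate of the map
represented by `Φ` under `γ`; the adjugate replaces the inverse to avoid denominators. -/
def conj (γ : Matrix (Fin 2) (Fin 2) R) (Φ : FormPair R) : FormPair R :=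
  fun i => ∑ j, MvPolynomial.C (γ i j) *
    MvPolynomial.bind₁ (fun a => ∑ b, MvPolynomial.C (γ.adjugate a b) * MvPolynomial.X b) (Φ j)

lemma IsHomogeneous.map {Φ : FormPair R} {n : ℕ} (hΦ : Φ.IsHomogeneous n) (φ : R →+* S) :
    (Φ.map φ).IsHomogeneous n :=
  fun i => (hΦ i).map φ

lemma IsHomogeneous.eval_smul {Φ : FormPair R} {n : ℕ} (hΦ : Φ.IsHomogeneous n) (c : R)
    (w : Fin 2 → R) : Φ.eval (c • w) = c ^ n • Φ.eval w :=
  funext fun i => eval_smul_of_isHomogeneous (hΦ i) c w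

lemma IsHomogeneous.conj {Φ : FormPair R} {n : ℕ} (hΦ : Φ.IsHomogeneous n)
    (γ : Matrix (Fin 2) (Fin 2) R) : (Φ.conj γ).IsHomogeneous n := by
  refine fun i => MvPolynomial.IsHomogeneous.sum _ _ _ fun j _ => .C_mul ?_ _
  have hlin (a : Fin 2) : MvPolynomial.IsHomogeneous
      (∑ b, MvPolynomial.C (γ.adjugate a b) * MvPolynomial.X b) 1 :=
    .sum _ _ _ fun b _ => MvPolynomial.isHomogeneous_C_mul_X _ b
  simpa only [one_mul, MvPolynomial.bind₁] using (hΦ j).aeval _ hlin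

lemma eval_conj (γ : Matrix (Fin 2) (Fin 2) R) (Φ : FormPair R) (w : Fin 2 → R) :
    (Φ.conj γ).eval w = γ *ᵥ Φ.eval (γ.adjugate *ᵥ w) := by
  have heval_bind (g : Fin 2 → MvPolynomial (Fin 2) R) (q : MvPolynomial (Fin 2) R) :
      MvPolynomial.eval w (MvPolynomial.bind₁ g q) =
        MvPolynomial.eval (fun a => MvPolynomial.eval w (g a)) q :=
    MvPolynomial.eval₂Hom_bind₁ _ _ _ _
  ext i
  simp only [eval, conj, map_sum, map_mul, MvPolynomial.eval_C, heval_bind, MvPolynomial.eval_X]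
  rfl

lemma eval_map (φ : R →+* S) (Φ : FormPair R) (w : Fin 2 → R) :
    (Φ.map φ).eval (φ ∘ w) = φ ∘ Φ.eval w :=
  funext fun i => (MvPolynomial.map_eval φ w (Φ i)).symm

lemma map_conj (φ : R →+* S) (γ : Matrix (Fin 2) (Fin 2) R) (Φ : FormPair R) :
    (Φ.conj γ).map φ = (Φ.map φ).conj (γ.map φ) := by
  have hadj : (γ.map φ).adjugate = γ.adjugate.map φ := (φ.map_adjugate γ).symm
  ext1 i
  simp [map, conj, MvPolynomial.map_bind₁, hadj]

end CommRing

section Field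

variable {k : Type*} [Field k]

/-- The two forms have no common zero on the projective line over the algebraic closure, i.e. their
resultant does not vanish. -/
def IsNondegenerate (Φ : FormPair k) : Prop :=
  ∀ w : Fin 2 → AlgebraicClosure k, (Φ.map (algebraMap k (AlgebraicClosure k))).eval w = 0 → w = 0

lemma IsNondegenerate.eval_ne_zero {Φ : FormPair k} (hΦ : Φ.IsNondegenerate) {w : Fin 2 → k}
    (hw : w ≠ 0) : Φ.eval w ≠ 0 := by
  intro h
  have hinj := (algebraMap k (AlgebraicClosure k)).injective
  have hzero := hΦ (algebraMap k _ ∘ w) (by rw [eval_map, h]; ext; simp)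
  exact hw (funext fun i => (map_eq_zero_iff _ hinj).1 (congrFun hzero i))

lemma IsNondegenerate.conj {Φ : FormPair k} (hΦ : Φ.IsNondegenerate)
    {γ : Matrix (Fin 2) (Fin 2) k} (hγ : γ.det ≠ 0) : (Φ.conj γ).IsNondegenerate := by
  intro w hw
  set ι := algebraMap k (AlgebraicClosure k)
  have hdet : (γ.map ι).det ≠ 0 := by
    rw [← RingHom.mapMatrix_apply, ← RingHom.map_det]
    exact (map_ne_zero ι).2 hγ
  have hadj : (γ.map ι).adjugate.det ≠ 0 := by simpa [Matrix.det_adjugate] using hdet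
  rw [map_conj, eval_conj] at hw
  exact Matrix.eq_zero_of_mulVec_eq_zero hadj
    (hΦ _ (Matrix.eq_zero_of_mulVec_eq_zero hdet hw))

/-- The self-map of `P¹(k)` represented by a nondegenerate pair of forms of the same degree. -/
def toMap (Φ : FormPair k) (P : Option k) : Option k :=
  pt (Φ.eval (coords P))

lemma IsHomogeneous.toMap_pt {Φ : FormPair k} {n : ℕ} (hΦ : Φ.IsHomogeneous n) {w : Fin 2 → k}
    (hw : w ≠ 0) : Φ.toMap (pt w) = pt (Φ.eval w) := by
  obtain ⟨c, hc, hcw⟩ := exists_smul_coords_pt hw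
  rw [toMap, ← pt_smul (pow_ne_zero n hc), ← hΦ.eval_smul, hcw]

lemma IsHomogeneous.toMap_eq_of_degree_zero {Φ : FormPair k} (hΦ : Φ.IsHomogeneous 0)
    (P Q : Option k) : Φ.toMap P = Φ.toMap Q := by
  have heval (w : Fin 2 → k) : Φ.eval w = Φ.eval 0 := by simpa using (hΦ.eval_smul 0 w).symm
  rw [toMap, toMap, heval (coords P), heval (coords Q)]

lemma semiconj_toMap_conj {Φ : FormPair k} {n : ℕ} (hΦ : Φ.IsHomogeneous n)
    (hΦ' : Φ.IsNondegenerate) {γ : Matrix (Fin 2) (Fin 2) k} (hγ : γ.det ≠ 0) :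
    Function.Semiconj (mobius γ) Φ.toMap (Φ.conj γ).toMap := by
  intro P
  have hP := coords_ne_zero P
  rw [toMap, mobius_pt γ (hΦ'.eval_ne_zero hP), mobius,
    (hΦ.conj γ).toMap_pt (mulVec_ne_zero hγ hP), eval_conj, Matrix.mulVec_mulVec,
    Matrix.adjugate_mul, Matrix.smul_mulVec, Matrix.one_mulVec, hΦ.eval_smul, Matrix.mulVec_smul,
    pt_smul (pow_ne_zero n hγ)]

end Field

end FormPair

/-! ### Homogenizing a rational function -/

section Homogenize

variable {R : Type*} [CommRing R]

lemma natDegree_aeval_X_one_le {Q : MvPolynomial (Fin 2) R} {n : ℕ} (hQ : Q.IsHomogeneous n) :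
    (MvPolynomial.aeval ![X, 1] Q : R[X]).natDegree ≤ n := by
  have hX : ∀ i : Fin 2, (![X, 1] i : R[X]).natDegree ≤ 1 := by
    simp [Fin.forall_fin_two, natDegree_X_le]
  simpa using MvPolynomial.aeval_natDegree_le Q hQ.totalDegree_le _ hX

lemma eval_homogenize_one_zero (p : R[X]) (n : ℕ) :
    MvPolynomial.eval ![1, 0] (p.homogenize n) = p.coeff n := by
  have hterm (i j : ℕ) : MvPolynomial.eval ![1, 0]
      (MvPolynomial.monomial (fun₀ | 0 => i | 1 => j) (p.coeff i)) = p.coeff i * 0 ^ j := by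
    simp [MvPolynomial.eval_monomial, Finsupp.prod_fintype, Fin.prod_univ_two]
  simp only [homogenize, map_sum, hterm]
  rw [Finset.sum_eq_single (n, 0)]
  · simp
  · rintro ⟨i, j⟩ hij hne
    have hj : j ≠ 0 := by rintro rfl; simp_all
    simp [hj]
  · simp

lemma exists_eq_X_mul_of_eval_eq_zero {Q : MvPolynomial (Fin 2) R} {n : ℕ}
    (hQ : Q.IsHomogeneous (n + 1)) (h : MvPolynomial.eval ![0, 1] Q = 0) :
    ∃ H : MvPolynomial (Fin 2) R, H.IsHomogeneous n ∧ Q = MvPolynomial.X 0 * H := by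
  set p : R[X] := MvPolynomial.aeval ![X, 1] Q
  have hdeg : p.natDegree ≤ n + 1 := natDegree_aeval_X_one_le hQ
  have hQp : p.homogenize (n + 1) = Q := homogenize_eq_of_isHomogeneous hQ rfl
  have hp0 : p.coeff 0 = 0 := by
    rw [← h, ← hQp, coeff_zero_eq_eval_zero]
    exact (eval₂_homogenize_of_eq_one hdeg (RingHom.id R) ![0, 1] rfl).symm
  have hpX : X * p.divX = p := by simpa [hp0] using X_mul_divX_add p
  have hdiv : p.divX.natDegree ≤ n := by rw [natDegree_divX_eq_natDegree_tsub_one]; omega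
  refine ⟨p.divX.homogenize n, isHomogeneous_homogenize _, ?_⟩
  rw [← hQp, ← hpX, add_comm n 1, homogenize_mul X p.divX natDegree_X_le hdiv, hpX]
  simp

/-- The degree `n` homogenizations of the numerator `p` and the denominator `q` of a rational
function. -/
def homogenizePair (n : ℕ) (p q : R[X]) : FormPair R :=
  ![p.homogenize n, q.homogenize n]

lemma isHomogeneous_homogenizePair (n : ℕ) (p q : R[X]) :
    (homogenizePair n p q).IsHomogeneous n :=
  Fin.forall_fin_two.2 ⟨isHomogeneous_homogenize p, isHomogeneous_homogenize q⟩

lemma map_homogenizePair {S : Type*} [CommRing S] (φ : R →+* S) (n : ℕ) (p q : R[X]) :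
    (homogenizePair n p q).map φ = homogenizePair n (p.map φ) (q.map φ) :=
  funext <| Fin.forall_fin_two.2 ⟨(homogenize_map φ p n).symm, (homogenize_map φ q n).symm⟩

lemma FormPair.IsHomogeneous.exists_homogenizePair_eq {Φ : FormPair R} {n : ℕ}
    (hΦ : Φ.IsHomogeneous n) :
    ∃ p q : R[X], p.natDegree ≤ n ∧ q.natDegree ≤ n ∧ homogenizePair n p q = Φ :=
  ⟨_, _, natDegree_aeval_X_one_le (hΦ 0), natDegree_aeval_X_one_le (hΦ 1), funext <|
    Fin.forall_fin_two.2 ⟨homogenize_eq_of_isHomogeneous (hΦ 0) rfl,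
      homogenize_eq_of_isHomogeneous (hΦ 1) rfl⟩⟩

lemma eval_homogenizePair_none (n : ℕ) (p q : R[X]) :
    (homogenizePair n p q).eval ![1, 0] = ![p.coeff n, q.coeff n] :=
  funext <| Fin.forall_fin_two.2 ⟨eval_homogenize_one_zero p n, eval_homogenize_one_zero q n⟩

lemma eval_homogenizePair_some {n : ℕ} {p q : R[X]} (hp : p.natDegree ≤ n) (hq : q.natDegree ≤ n)
    (z : R) : (homogenizePair n p q).eval ![z, 1] = ![p.eval z, q.eval z] :=
  funext <| Fin.forall_fin_two.2 ⟨eval₂_homogenize_of_eq_one hp (RingHom.id R) ![z, 1] rfl,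
    eval₂_homogenize_of_eq_one hq (RingHom.id R) ![z, 1] rfl⟩

variable {k : Type*} [Field k] {n : ℕ} {p q : k[X]}

lemma isNondegenerate_homogenizePair_iff (hp : p.natDegree ≤ n) (hq : q.natDegree ≤ n) :
    (homogenizePair n p q).IsNondegenerate ↔
      IsCoprime p q ∧ (p.coeff n ≠ 0 ∨ q.coeff n ≠ 0) := by
  rw [← isCoprime_map (algebraMap k (AlgebraicClosure k))]
  set ι := algebraMap k (AlgebraicClosure k)
  have hpι : (p.map ι).natDegree ≤ n := natDegree_map_le.trans hp
  have hqι : (q.map ι).natDegree ≤ n := natDegree_map_le.trans hq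
  rw [FormPair.IsNondegenerate, map_homogenizePair,
    isCoprime_iff_aeval_ne_zero_of_isAlgClosed _ (AlgebraicClosure k)]
  constructor
  · refine fun h => ⟨fun z => ?_, ?_⟩
    · by_contra! hz
      refine one_ne_zero (congrFun (h ![z, 1] ?_) 1)
      rw [eval_homogenizePair_some hpι hqι, ← coe_aeval_eq_eval, hz.1, hz.2]
      simp
    · by_contra! hcoeff
      refine one_ne_zero (congrFun (h ![1, 0] ?_) 0)
      simp [eval_homogenizePair_none, coeff_map, hcoeff.1, hcoeff.2]
  · rintro ⟨hcop, hcoeff⟩ w hw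
    by_contra hw0
    obtain ⟨c, hc, hcw⟩ := exists_smul_coords_pt hw0
    rw [← hcw, (isHomogeneous_homogenizePair n _ _).eval_smul,
      smul_eq_zero_iff_right (pow_ne_zero n hc)] at hw
    generalize pt w = P at hw
    rcases P with _ | z
    · rw [coords, eval_homogenizePair_none] at hw
      simp_all
    · rw [coords, eval_homogenizePair_some hpι hqι] at hw
      specialize hcop z
      simp_all

lemma rmap_eq_toMap (hp : p.natDegree ≤ n) (hq : q.natDegree ≤ n)
    (hn : p.coeff n ≠ 0 ∨ q.coeff n ≠ 0) (hq0 : q ≠ 0) :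
    rmap p q = (homogenizePair n p q).toMap := by
  funext P
  rcases P with _ | z
  · rw [FormPair.toMap, coords, eval_homogenizePair_none]
    by_cases hlt : q.natDegree < p.natDegree
    · simp [rmap, pt, hlt, coeff_eq_zero_of_natDegree_lt (hlt.trans_le hp)]
    · have hqn : q.natDegree = n := by
        by_contra hne
        have hqlt : q.natDegree < n := lt_of_le_of_ne hq hne
        rcases hn with h | h
        · exact h (coeff_eq_zero_of_natDegree_lt ((not_lt.1 hlt).trans_lt hqlt))
        · exact h (coeff_eq_zero_of_natDegree_lt hqlt)
      have hlc : q.coeff n ≠ 0 := by rwa [← hqn, coeff_natDegree, leadingCoeff_ne_zero]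
      simp [rmap, pt, hp, hlc, leadingCoeff, hqn]
  · rw [FormPair.toMap, coords, eval_homogenizePair_some hp hq]
    by_cases hz : q.eval z = 0 <;> simp [rmap, pt, hz]

end Homogenize

/-! ### Models with good reduction -/

section GoodModel

variable {O K k : Type*} [CommRing O] [Field K] [Algebra O K] [Field k]

variable (K) in
/-- Good reduction in homogeneous form: a degree `n` pair of forms over `O` is nondegenerate both
over the fraction field `K` and after reduction along `π : O → k`. -/
structure HasGoodReduction (π : O →+* k) (n : ℕ) (Φ : FormPair O) : Prop where
  isHomogeneous : Φ.IsHomogeneous n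
  generic : (Φ.map (algebraMap O K)).IsNondegenerate
  special : (Φ.map π).IsNondegenerate

/-- The matrix `σ` conjugates the self-map `φ` of `P¹(K)` to a map with good reduction, given by the
forms `Φ` over `O`. -/
structure IsGoodModel (π : O →+* k) (n : ℕ) (Φ : FormPair O) (σ : Matrix (Fin 2) (Fin 2) K)
    (φ : Option K → Option K) : Prop extends HasGoodReduction K π n Φ where
  det_ne_zero : σ.det ≠ 0
  semiconj : Function.Semiconj (mobius σ) φ (Φ.map (algebraMap O K)).toMap

variable {π : O →+* k} {n : ℕ} {Φ : FormPair O}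

lemma det_map_ne_zero {F : Type*} [Field F] {φ : O →+* F} {γ : Matrix (Fin 2) (Fin 2) O}
    (hγ : φ γ.det ≠ 0) : (γ.map φ).det ≠ 0 := by
  rwa [← RingHom.mapMatrix_apply, ← RingHom.map_det]

lemma algebraMap_ne_zero_of_map_ne_zero [FaithfulSMul O K] {a : O} (ha : π a ≠ 0) :
    algebraMap O K a ≠ 0 :=
  (FaithfulSMul.algebraMap_eq_zero_iff O K).not.2 fun h => ha (by rw [h, map_zero])

lemma algebraMap_comp_ne_zero [FaithfulSMul O K] {w : Fin 2 → O} (hw : π ∘ w ≠ 0) :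
    algebraMap O K ∘ w ≠ 0 := by
  obtain ⟨i, hi⟩ := Function.ne_iff.1 hw
  exact Function.ne_iff.2 ⟨i, algebraMap_ne_zero_of_map_ne_zero hi⟩

lemma HasGoodReduction.conj [FaithfulSMul O K] (h : HasGoodReduction K π n Φ)
    {γ : Matrix (Fin 2) (Fin 2) O} (hγ : π γ.det ≠ 0) :
    HasGoodReduction K π n (Φ.conj γ) where
  isHomogeneous := h.isHomogeneous.conj γ
  generic := by
    rw [FormPair.map_conj]
    exact h.generic.conj (det_map_ne_zero (algebraMap_ne_zero_of_map_ne_zero hγ))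
  special := by
    rw [FormPair.map_conj]
    exact h.special.conj (det_map_ne_zero hγ)

lemma IsGoodModel.conj [FaithfulSMul O K] {σ : Matrix (Fin 2) (Fin 2) K}
    {φ : Option K → Option K} (h : IsGoodModel π n Φ σ φ) {γ : Matrix (Fin 2) (Fin 2) O}
    (hγ : π γ.det ≠ 0) : IsGoodModel π n (Φ.conj γ) (γ.map (algebraMap O K) * σ) φ := by
  have hγK : (γ.map (algebraMap O K)).det ≠ 0 :=
    det_map_ne_zero (algebraMap_ne_zero_of_map_ne_zero hγ)
  refine ⟨h.toHasGoodReduction.conj hγ, ?_, ?_⟩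
  · rw [Matrix.det_mul]
    exact mul_ne_zero hγK h.det_ne_zero
  · rw [mobius_mul _ h.det_ne_zero, FormPair.map_conj]
    exact (FormPair.semiconj_toMap_conj (h.isHomogeneous.map _) h.generic hγK).comp_left h.semiconj

lemma exists_primitive_coords [IsDomain O] [ValuationRing O] [IsFractionRing O K] (π : O →+* k)
    (P : Option K) : ∃ w : Fin 2 → O, π ∘ w ≠ 0 ∧ pt (algebraMap O K ∘ w) = P := by
  rcases P with _ | z
  · exact ⟨![1, 0], fun h => by simpa using congrFun h 0, by simp [pt]⟩
  · rcases ValuationRing.isInteger_or_isInteger O z with ⟨c, hc⟩ | ⟨c, hc⟩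
    · exact ⟨![c, 1], fun h => by simpa using congrFun h 1, by simp [pt, hc]⟩
    · rcases eq_or_ne z 0 with rfl | hz
      · exact ⟨![0, 1], fun h => by simpa using congrFun h 1, by simp [pt]⟩
      · exact ⟨![1, c], fun h => by simpa using congrFun h 0, by simp [pt, hc, hz]⟩

lemma exists_mulVec_apply_zero_eq_zero {w : Fin 2 → O} (hw : π ∘ w ≠ 0) :
    ∃ γ : Matrix (Fin 2) (Fin 2) O, π γ.det ≠ 0 ∧ (γ *ᵥ w) 0 = 0 := by
  by_cases hw1 : π (w 1) = 0
  · have hw0 : π (w 0) ≠ 0 := fun hw0 => hw (funext (Fin.forall_fin_two.2 ⟨hw0, hw1⟩))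
    exact ⟨!![w 1, -w 0; 1, 0], by simpa using hw0, by simp [Matrix.mulVec, dotProduct, mul_comm]⟩
  · exact ⟨!![w 1, -w 0; 0, 1], by simpa using hw1, by simp [Matrix.mulVec, dotProduct, mul_comm]⟩

end GoodModel

/-! ### The multiplier at a fixed point moved to `0` -/

section Multiplier

lemma rmap_some_eq_pt (f g : K[X]) (z : K) : rmap f g (some z) = pt ![f.eval z, g.eval z] := by
  by_cases hz : g.eval z = 0 <;> simp [rmap, pt, hz]

lemma eval_pair_ne_zero {f g : K[X]} (hfg : IsCoprime f g) (z : K) :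
    ![f.eval z, g.eval z] ≠ 0 := by
  intro h
  obtain ⟨r, s, hrs⟩ := hfg
  have hone : r.eval z * f.eval z + s.eval z * g.eval z = 1 := by
    rw [← eval_mul, ← eval_mul, ← eval_add, hrs, eval_one]
  have hf : f.eval z = 0 := congrFun h 0
  have hg : g.eval z = 0 := congrFun h 1
  simp [hf, hg] at hone

lemma rmap_eq_self_iff {f g : K[X]} {x : K} :
    rmap f g (some x) = some x ↔ g.eval x ≠ 0 ∧ f.eval x = x * g.eval x := by
  simp [rmap_some_eq_pt, pt_eq_some_iff]

lemma multiplier_of_rmap_eq_self {f g : K[X]} {x : K} (hfix : rmap f g (some x) = some x) :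
    multiplier f g (some x) * g.eval x = (derivative f).eval x - x * (derivative g).eval x := by
  obtain ⟨hg, hf⟩ := rmap_eq_self_iff.1 hfix
  simp only [multiplier, eval_sub, eval_mul, hf]
  field_simp

lemma eval_map_C_mulVec (σ : Matrix (Fin 2) (Fin 2) K) (p q : K[X]) (z : K) (i : Fin 2) :
    ((σ.map C *ᵥ ![p, q]) i).eval z = (σ *ᵥ ![p.eval z, q.eval z]) i := by
  simp [Matrix.mulVec, dotProduct]

lemma derivative_map_C_mulVec (σ : Matrix (Fin 2) (Fin 2) K) (p q : K[X]) (i : Fin 2) :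
    derivative ((σ.map C *ᵥ ![p, q]) i) = (σ.map C *ᵥ ![derivative p, derivative q]) i := by
  simp [Matrix.mulVec, dotProduct]

lemma eval_aeval_map_C_mulVec (σ : Matrix (Fin 2) (Fin 2) K) (Q : MvPolynomial (Fin 2) K) (z : K) :
    (MvPolynomial.aeval (σ.map C *ᵥ ![X, 1]) Q).eval z = MvPolynomial.eval (σ *ᵥ ![z, 1]) Q := by
  have hC : (evalRingHom z).comp (algebraMap K K[X]) = RingHom.id K := by
    ext
    simp
  rw [MvPolynomial.aeval_def, MvPolynomial.polynomial_eval_eval₂, hC]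
  simp only [eval_map_C_mulVec, eval_X, eval_one]
  rfl

lemma cross_mul_of_semiconj [Infinite K] {Ψ : FormPair K} {n : ℕ} (hΨ : Ψ.IsHomogeneous n)
    (hΨ' : Ψ.IsNondegenerate) {σ : Matrix (Fin 2) (Fin 2) K} (hσ : σ.det ≠ 0) {f g : K[X]}
    (hfg : IsCoprime f g) (h : Function.Semiconj (mobius σ) (rmap f g) Ψ.toMap) :
    (σ.map C *ᵥ ![f, g]) 0 * MvPolynomial.aeval (σ.map C *ᵥ ![X, 1]) (Ψ 1) =
      MvPolynomial.aeval (σ.map C *ᵥ ![X, 1]) (Ψ 0) * (σ.map C *ᵥ ![f, g]) 1 := by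
  refine Polynomial.funext fun z => ?_
  have hz : ![z, 1] ≠ 0 := coords_ne_zero (some z)
  have hfgz := eval_pair_ne_zero hfg z
  have hconj : pt (σ *ᵥ ![f.eval z, g.eval z]) = pt (Ψ.eval (σ *ᵥ ![z, 1])) := by
    rw [← mobius_pt σ hfgz, ← rmap_some_eq_pt, h, mobius, coords,
      hΨ.toMap_pt (mulVec_ne_zero hσ hz)]
  have hcross := cross_mul_eq_of_pt_eq (mulVec_ne_zero hσ hfgz)
    (hΨ'.eval_ne_zero (mulVec_ne_zero hσ hz)) hconj
  rw [eval_mul, eval_mul, eval_aeval_map_C_mulVec, eval_aeval_map_C_mulVec, eval_map_C_mulVec,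
    eval_map_C_mulVec]
  exact hcross

lemma multiplier_mul_eq [Infinite K] {Ψ : FormPair K} {n : ℕ} (hΨ : Ψ.IsHomogeneous (n + 1))
    (hΨ' : Ψ.IsNondegenerate) {H : MvPolynomial (Fin 2) K} (hH : H.IsHomogeneous n)
    (hΨH : Ψ 0 = MvPolynomial.X 0 * H) {σ : Matrix (Fin 2) (Fin 2) K} (hσ : σ.det ≠ 0)
    {f g : K[X]} (hfg : IsCoprime f g) (h : Function.Semiconj (mobius σ) (rmap f g) Ψ.toMap)
    {x : K} (hfix : rmap f g (some x) = some x) (hx : mobius σ (some x) = some 0) :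
    multiplier f g (some x) * MvPolynomial.eval ![0, 1] (Ψ 1) = MvPolynomial.eval ![0, 1] H := by
  obtain ⟨hgx, hfx⟩ := rmap_eq_self_iff.1 hfix
  set B := σ 1 0 * x + σ 1 1
  obtain ⟨hB, hA⟩ : B ≠ 0 ∧ σ 0 0 * x + σ 0 1 = 0 := by
    simpa [mobius, coords, pt_eq_some_iff, Matrix.mulVec, dotProduct] using hx
  have hσ00 : σ 0 0 ≠ 0 := by
    rintro h00
    have h01 : σ 0 1 = 0 := by simpa [h00] using hA
    simp [Matrix.det_fin_two, h00, h01] at hσ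
  have hpoint : σ *ᵥ ![x, 1] = B • ![0, 1] := by
    ext i
    fin_cases i <;> simp [Matrix.mulVec, dotProduct, hA, B]
  have hvalue : σ *ᵥ ![f.eval x, g.eval x] = (g.eval x * B) • ![0, 1] := by
    rw [mul_smul, ← hpoint, ← Matrix.mulVec_smul, hfx]
    simp [mul_comm]
  have hvalue' : (σ *ᵥ ![(derivative f).eval x, (derivative g).eval x]) 0 =
      σ 0 0 * (multiplier f g (some x) * g.eval x) := by
    rw [multiplier_of_rmap_eq_self hfix, Matrix.mulVec_fin_two, eq_neg_of_add_eq_zero_right hA]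
    simp only [Matrix.cons_val_zero, Matrix.cons_val_one]
    ring
  have hderiv := congrArg (fun P => (derivative P).eval x)
    (cross_mul_of_semiconj hΨ hΨ' hσ hfg h)
  simp only [hΨH, map_mul, MvPolynomial.aeval_X, derivative_mul, eval_add, eval_mul,
    eval_aeval_map_C_mulVec, eval_map_C_mulVec, derivative_map_C_mulVec, hpoint, hvalue, hvalue',
    eval_smul_of_isHomogeneous hH, eval_smul_of_isHomogeneous (hΨ 1), derivative_X,
    derivative_one] at hderiv
  have hne : σ 0 0 * g.eval x * B ^ (n + 1) ≠ 0 :=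
    mul_ne_zero (mul_ne_zero hσ00 hgx) (pow_ne_zero _ hB)
  refine mul_left_cancel₀ hne ?_
  simp only [Pi.smul_apply, Matrix.cons_val_zero, smul_eq_mul, mul_zero, Matrix.mulVec_fin_two,
    Matrix.map_apply, Matrix.cons_val_one, Matrix.cons_val_fin_one, mul_one, zero_mul, add_zero,
    eval_one, eval_zero, eval_X, hA] at hderiv
  linear_combination hderiv

end Multiplier

/-! ### Normalizing three marked points -/

section MarkedPoints

/-- Homogeneous form of the Möbius transformation sending `0`, `w₁`, `w₂` to `0`, `1`, `∞`. -/
def normalizer {R : Type*} [CommRing R] (w₁ w₂ : Fin 2 → R) : Matrix (Fin 2) (Fin 2) R :=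
  !![w₁ 0 * w₂ 1 - w₂ 0 * w₁ 1, 0; w₁ 0 * w₂ 1, -(w₁ 0 * w₂ 0)]

lemma det_normalizer {R : Type*} [CommRing R] (w₁ w₂ : Fin 2 → R) :
    (normalizer w₁ w₂).det = -((w₁ 0 * w₂ 1 - w₂ 0 * w₁ 1) * (w₁ 0 * w₂ 0)) := by
  rw [normalizer, Matrix.det_fin_two_of]
  ring

lemma map_normalizer {R S : Type*} [CommRing R] [CommRing S] (φ : R →+* S) (w₁ w₂ : Fin 2 → R) :
    (normalizer w₁ w₂).map φ = normalizer (φ ∘ w₁) (φ ∘ w₂) := by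
  ext i j
  fin_cases i <;> fin_cases j <;> simp [normalizer]

lemma normalizer_mulVec {R : Type*} [CommRing R] (w₁ w₂ w : Fin 2 → R) :
    normalizer w₁ w₂ *ᵥ w =
      ![(w₁ 0 * w₂ 1 - w₂ 0 * w₁ 1) * w 0, w₁ 0 * (w₂ 1 * w 0 - w₂ 0 * w 1)] := by
  rw [Matrix.mulVec_fin_two, normalizer]
  refine funext (Fin.forall_fin_two.2 ⟨?_, ?_⟩)
  · change (w₁ 0 * w₂ 1 - w₂ 0 * w₁ 1) * w 0 + 0 * w 1 = _
    rw [zero_mul, add_zero]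
    rfl
  · change w₁ 0 * w₂ 1 * w 0 + -(w₁ 0 * w₂ 0) * w 1 = w₁ 0 * (w₂ 1 * w 0 - w₂ 0 * w 1)
    ring

section Field

variable {k : Type*} [Field k] {w₁ w₂ : Fin 2 → k}

lemma mobius_normalizer_zero (h : (normalizer w₁ w₂).det ≠ 0) :
    mobius (normalizer w₁ w₂) (some 0) = some 0 := by
  rw [det_normalizer, neg_ne_zero, mul_ne_zero_iff] at h
  rw [mobius, coords, pt_eq_some_iff, normalizer_mulVec]
  simpa using h.2

lemma mobius_normalizer_fst (h : (normalizer w₁ w₂).det ≠ 0) (hw₁ : w₁ ≠ 0) :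
    mobius (normalizer w₁ w₂) (pt w₁) = some 1 := by
  rw [det_normalizer, neg_ne_zero, mul_ne_zero_iff] at h
  rw [mobius_pt _ hw₁, pt_eq_some_iff, normalizer_mulVec, one_mul]
  change w₁ 0 * (w₂ 1 * w₁ 0 - w₂ 0 * w₁ 1) ≠ 0 ∧
    (w₁ 0 * w₂ 1 - w₂ 0 * w₁ 1) * w₁ 0 = w₁ 0 * (w₂ 1 * w₁ 0 - w₂ 0 * w₁ 1)
  rw [mul_comm (w₂ 1)]
  exact ⟨mul_ne_zero (left_ne_zero_of_mul h.2) h.1, mul_comm _ _⟩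

lemma mobius_normalizer_snd (w₁ : Fin 2 → k) (hw₂ : w₂ ≠ 0) :
    mobius (normalizer w₁ w₂) (pt w₂) = none := by
  rw [mobius_pt _ hw₂, pt_eq_none_iff, normalizer_mulVec]
  change w₁ 0 * (w₂ 1 * w₂ 0 - w₂ 0 * w₂ 1) = 0
  ring

lemma apply_zero_ne_zero_of_eval_eq_zero {H : MvPolynomial (Fin 2) k} {n : ℕ}
    (hH : H.IsHomogeneous n) (hH₀ : MvPolynomial.eval ![0, 1] H ≠ 0) {w : Fin 2 → k} (hw : w ≠ 0)
    (hHw : MvPolynomial.eval w H = 0) : w 0 ≠ 0 := by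
  intro hw0
  have hw1 : w 1 ≠ 0 := fun hw1 => hw (funext (Fin.forall_fin_two.2 ⟨hw0, hw1⟩))
  have hsmul : w = w 1 • ![0, 1] := by
    ext i
    fin_cases i <;> simp [hw0]
  rw [hsmul, eval_smul_of_isHomogeneous hH] at hHw
  exact mul_ne_zero (pow_ne_zero n hw1) hH₀ hHw

/-- If `0` is a simple zero of the map, then `0`, its preimage `w₁` and the preimage `w₂` of `w₁`
are pairwise distinct. -/
lemma det_normalizer_ne_zero {Φ : FormPair k} (hΦ : Φ.IsNondegenerate)
    {H : MvPolynomial (Fin 2) k} {n : ℕ} (hH : H.IsHomogeneous n)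
    (hΦH : Φ 0 = MvPolynomial.X 0 * H) (hH₀ : MvPolynomial.eval ![0, 1] H ≠ 0)
    (hw₁ : w₁ ≠ 0) (hHw₁ : MvPolynomial.eval w₁ H = 0)
    (hw₂ : w₂ ≠ 0) (hΦw₂ : Φ.eval w₂ 0 * w₁ 1 = w₁ 0 * Φ.eval w₂ 1) :
    (normalizer w₁ w₂).det ≠ 0 := by
  have hw₁0 : w₁ 0 ≠ 0 := apply_zero_ne_zero_of_eval_eq_zero hH hH₀ hw₁ hHw₁
  have hΦw₂0 : Φ.eval w₂ 0 ≠ 0 := by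
    intro h0
    have h1 : Φ.eval w₂ 1 = 0 := by simpa [h0, hw₁0] using hΦw₂
    exact hΦ.eval_ne_zero hw₂ (funext (Fin.forall_fin_two.2 ⟨h0, h1⟩))
  have heval : Φ.eval w₂ 0 = w₂ 0 * MvPolynomial.eval w₂ H := by
    rw [FormPair.eval, hΦH, map_mul, MvPolynomial.eval_X]
  obtain ⟨hw₂0, hHw₂⟩ := mul_ne_zero_iff.1 (heval ▸ hΦw₂0)
  rw [det_normalizer, neg_ne_zero]
  refine mul_ne_zero (fun hD => hHw₂ ?_) (mul_ne_zero hw₁0 hw₂0)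
  have hprop : w₁ 0 • w₂ = w₂ 0 • w₁ := by
    ext i
    fin_cases i
    · exact mul_comm _ _
    · exact sub_eq_zero.1 hD
  have hHprop := eval_smul_of_isHomogeneous hH (w₁ 0) w₂
  rw [hprop, eval_smul_of_isHomogeneous hH, hHw₁, mul_zero] at hHprop
  exact (mul_eq_zero.1 hHprop.symm).resolve_left (pow_ne_zero n hw₁0)

end Field

section Model

variable {O k : Type*} [CommRing O] [Algebra O K] [Field k]
variable {π : O →+* k} {n : ℕ} {Φ : FormPair O} {σ : Matrix (Fin 2) (Fin 2) K}

lemma HasGoodReduction.cross_mul_eq [FaithfulSMul O K] (hΦ : HasGoodReduction K π n Φ)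
    {w w' : Fin 2 → O} (hw : π ∘ w ≠ 0) (hw' : π ∘ w' ≠ 0)
    (h : (Φ.map (algebraMap O K)).toMap (pt (algebraMap O K ∘ w)) = pt (algebraMap O K ∘ w')) :
    Φ.eval w 0 * w' 1 = w' 0 * Φ.eval w 1 := by
  have hwK : algebraMap O K ∘ w ≠ 0 := algebraMap_comp_ne_zero hw
  rw [(hΦ.isHomogeneous.map _).toMap_pt hwK] at h
  have hcross := cross_mul_eq_of_pt_eq (hΦ.generic.eval_ne_zero hwK) (algebraMap_comp_ne_zero hw') h
  rw [FormPair.eval_map] at hcross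
  exact FaithfulSMul.algebraMap_injective O K (by simpa using hcross)

lemma IsGoodModel.exists_mobius_eq_zero [IsDomain O] [ValuationRing O] [IsFractionRing O K]
    {φ : Option K → Option K} (h : IsGoodModel π n Φ σ φ) (P : Option K) :
    ∃ Φ' σ', IsGoodModel π n Φ' σ' φ ∧ mobius σ' P = some 0 := by
  obtain ⟨w, hw, hwP⟩ := exists_primitive_coords π (mobius σ P)
  obtain ⟨γ, hγ, hγw⟩ := exists_mulVec_apply_zero_eq_zero hw
  refine ⟨_, _, h.conj hγ, ?_⟩
  have hwK : algebraMap O K ∘ w ≠ 0 := algebraMap_comp_ne_zero hw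
  have hγK : (γ.map (algebraMap O K)).det ≠ 0 :=
    det_map_ne_zero (algebraMap_ne_zero_of_map_ne_zero hγ)
  rw [mobius_mul _ h.det_ne_zero, Function.comp_apply, ← hwP, mobius_pt _ hwK,
    pt_eq_zero_iff (mulVec_ne_zero hγK hwK), ← RingHom.map_mulVec, hγw, map_zero]

lemma comp_zero_one {R S : Type*} [CommRing R] [CommRing S] (φ : R →+* S) :
    φ ∘ ![0, 1] = ![0, 1] := by
  ext i
  fin_cases i <;> simp

lemma comp_zero_one_ne_zero (π : O →+* k) : π ∘ ![0, 1] ≠ 0 :=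
  fun h => by simpa using congrFun h 1

lemma pt_algebraMap_zero_one : pt (algebraMap O K ∘ ![0, 1]) = some 0 := by
  simp [pt]

lemma HasGoodReduction.eval_zero_eq_zero [FaithfulSMul O K] (hΦ : HasGoodReduction K π n Φ)
    {w : Fin 2 → O} (hw : π ∘ w ≠ 0)
    (h : (Φ.map (algebraMap O K)).toMap (pt (algebraMap O K ∘ w)) = some 0) :
    Φ.eval w 0 = 0 := by
  simpa using hΦ.cross_mul_eq hw (comp_zero_one_ne_zero π) (h.trans pt_algebraMap_zero_one.symm)

lemma HasGoodReduction.exists_eq_X_mul [FaithfulSMul O K] (hΦ : HasGoodReduction K π n Φ)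
    (h₀ : (Φ.map (algebraMap O K)).toMap (some 0) = some 0) {P : Option K}
    (hP : (Φ.map (algebraMap O K)).toMap P ≠ some 0) :
    ∃ m, n = m + 1 ∧ ∃ H, H.IsHomogeneous m ∧ Φ 0 = MvPolynomial.X 0 * H := by
  cases n with
  | zero =>
    refine absurd ?_ hP
    rw [← h₀, (hΦ.isHomogeneous.map _).toMap_eq_of_degree_zero]
  | succ m =>
    refine ⟨m, rfl, exists_eq_X_mul_of_eval_eq_zero (hΦ.isHomogeneous 0) ?_⟩
    exact hΦ.eval_zero_eq_zero (comp_zero_one_ne_zero π) (by rwa [pt_algebraMap_zero_one])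

lemma IsGoodModel.eval_factor_ne_zero [Infinite K] [FaithfulSMul O K] {f g : K[X]}
    (h : IsGoodModel π (n + 1) Φ σ (rmap f g)) {H : MvPolynomial (Fin 2) O}
    (hH : H.IsHomogeneous n) (hΦH : Φ 0 = MvPolynomial.X 0 * H) (hfg : IsCoprime f g) {x : K}
    (hfix : rmap f g (some x) = some x) (hx : mobius σ (some x) = some 0) {u : O}
    (hu : algebraMap O K u = multiplier f g (some x)) (hπu : π u ≠ 0) :
    MvPolynomial.eval ![0, 1] (MvPolynomial.map π H) ≠ 0 := by
  have hmul : u * MvPolynomial.eval ![0, 1] (Φ 1) = MvPolynomial.eval ![0, 1] H := by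
    refine FaithfulSMul.algebraMap_injective O K ?_
    rw [map_mul, MvPolynomial.map_eval, MvPolynomial.map_eval, comp_zero_one, hu]
    refine multiplier_mul_eq (h.isHomogeneous.map _) h.generic (hH.map _) ?_ h.det_ne_zero hfg
      h.semiconj hfix hx
    rw [FormPair.map, hΦH, map_mul, MvPolynomial.map_X]
  rw [← comp_zero_one π, ← MvPolynomial.map_eval, ← hmul, map_mul]
  refine mul_ne_zero hπu fun h1 => h.special.eval_ne_zero (comp_zero_one_ne_zero π) ?_
  rw [FormPair.eval_map]
  refine funext (Fin.forall_fin_two.2 ⟨?_, h1⟩)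
  simp [FormPair.eval, hΦH]

lemma IsGoodModel.exists_normalized_of_mobius_eq_zero [Infinite K] [IsDomain O] [ValuationRing O]
    [IsFractionRing O K] {f g : K[X]} (h : IsGoodModel π n Φ σ (rmap f g)) (hfg : IsCoprime f g)
    {x : K} (hfix : rmap f g (some x) = some x) (hx : mobius σ (some x) = some 0) {u : O}
    (hu : algebraMap O K u = multiplier f g (some x)) (hπu : π u ≠ 0) {P Q : Option K}
    (hP : rmap f g P = some x) (hPx : P ≠ some x) (hQ : rmap f g Q = P) :
    ∃ Φ' σ', IsGoodModel π n Φ' σ' (rmap f g) ∧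
      mobius σ' (some x) = some 0 ∧ mobius σ' P = some 1 ∧ mobius σ' Q = none := by
  have hσP : mobius σ P ≠ some 0 := hx ▸ (mobius_injective h.det_ne_zero).ne hPx
  have hmap (R : Option K) : (Φ.map (algebraMap O K)).toMap (mobius σ R) = mobius σ (rmap f g R) :=
    (h.semiconj R).symm
  obtain ⟨m, rfl, H, hH, hΦH⟩ := h.exists_eq_X_mul (by rw [← hx, hmap, hfix])
    (P := mobius σ Q) (by rwa [hmap, hQ])
  obtain ⟨w₁, hw₁, hw₁P⟩ := exists_primitive_coords π (mobius σ P)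
  obtain ⟨w₂, hw₂, hw₂Q⟩ := exists_primitive_coords π (mobius σ Q)
  have hw₁K : algebraMap O K ∘ w₁ ≠ 0 := algebraMap_comp_ne_zero hw₁
  have hHw₁ : MvPolynomial.eval w₁ H = 0 := by
    have hzero := h.eval_zero_eq_zero hw₁ (by rw [hw₁P, hmap, hP, hx])
    rw [FormPair.eval, hΦH, map_mul, MvPolynomial.eval_X] at hzero
    refine (mul_eq_zero.1 hzero).resolve_left fun hw₁0 => hσP ?_
    rw [← hw₁P, pt_eq_zero_iff hw₁K, Function.comp_apply, hw₁0, map_zero]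
  have hΦw₂ := h.cross_mul_eq hw₂ hw₁ (by rw [hw₁P, hw₂Q, hmap, hQ])
  have hdet : π (normalizer w₁ w₂).det ≠ 0 := by
    rw [RingHom.map_det, RingHom.mapMatrix_apply, map_normalizer]
    refine det_normalizer_ne_zero h.special (hH.map π) ?_
      (h.eval_factor_ne_zero hH hΦH hfg hfix hx hu hπu) hw₁ ?_ hw₂ ?_
    · rw [FormPair.map, hΦH, map_mul, MvPolynomial.map_X]
    · rw [← MvPolynomial.map_eval, hHw₁, map_zero]
    · simpa [FormPair.eval_map] using congrArg π hΦw₂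
  have hdetK : (normalizer (algebraMap O K ∘ w₁) (algebraMap O K ∘ w₂)).det ≠ 0 := by
    rw [← map_normalizer]
    exact det_map_ne_zero (algebraMap_ne_zero_of_map_ne_zero hdet)
  refine ⟨_, _, h.conj hdet, ?_⟩
  rw [mobius_mul _ h.det_ne_zero, map_normalizer]
  simp only [Function.comp_apply, hx, ← hw₁P, ← hw₂Q]
  exact ⟨mobius_normalizer_zero hdetK, mobius_normalizer_fst hdetK hw₁K,
    mobius_normalizer_snd _ (algebraMap_comp_ne_zero hw₂)⟩

lemma IsGoodModel.exists_normalized [Infinite K] [IsDomain O] [ValuationRing O]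
    [IsFractionRing O K] {f g : K[X]} (h : IsGoodModel π n Φ σ (rmap f g)) (hfg : IsCoprime f g)
    {x : K} (hfix : rmap f g (some x) = some x) {u : O}
    (hu : algebraMap O K u = multiplier f g (some x)) (hπu : π u ≠ 0) {P Q : Option K}
    (hP : rmap f g P = some x) (hPx : P ≠ some x) (hQ : rmap f g Q = P) :
    ∃ Φ' σ', IsGoodModel π n Φ' σ' (rmap f g) ∧
      mobius σ' (some x) = some 0 ∧ mobius σ' P = some 1 ∧ mobius σ' Q = none := by
  obtain ⟨Φ₀, σ₀, hΦ₀, hx⟩ := h.exists_mobius_eq_zero (some x)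
  exact hΦ₀.exists_normalized_of_mobius_eq_zero hfg hfix hx hu hπu hP hPx hQ

end Model

end MarkedPoints

/-! ### Good reduction over the ring of integers -/

section Integers

variable {v : AbsoluteValue K ℝ} {hna : IsNonarchimedean (⇑v)}

lemma mk_vmax_ne_zero_iff {u : vints v hna} :
    Ideal.Quotient.mk (vmax v hna) u ≠ 0 ↔ v (u : K) = 1 := by
  rw [Ne, Ideal.Quotient.eq_zero_iff_mem]
  exact not_lt.trans ⟨fun h => le_antisymm (show v u ≤ 1 from u.2) h, fun h => h.ge⟩

instance : (vmax v hna).IsMaximal := by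
  refine Ideal.isMaximal_iff.2 ⟨fun h => absurd h (by simp [vmax]), fun J u _ hu huJ => ?_⟩
  have hvu : v (u : K) = 1 := le_antisymm u.2 (not_lt.1 hu)
  have hu0 : (u : K) ≠ 0 := v.ne_zero_iff.1 (by rw [hvu]; exact one_ne_zero)
  let w : vints v hna := ⟨(u : K)⁻¹, by simp [vints, hvu]⟩
  have hwu : w * u = 1 := Subtype.ext (inv_mul_cancel₀ hu0)
  exact hwu ▸ J.mul_mem_left w huJ

instance : Field (vints v hna ⧸ vmax v hna) := Ideal.Quotient.field _

variable (v hna) in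
/-- `vints v hna` as a valuation subring, from which it inherits its ring-theoretic properties. -/
def valuationSubring : ValuationSubring K where
  toSubring := vints v hna
  mem_or_inv_mem' := fun z => by
    refine (le_total (v z) 1).imp id fun h => ?_
    change v z⁻¹ ≤ 1
    rw [map_inv₀]
    exact inv_le_one_of_one_le₀ h

instance : ValuationRing (vints v hna) :=
  inferInstanceAs (ValuationRing (valuationSubring v hna))

instance : IsFractionRing (vints v hna) K :=
  inferInstanceAs (IsFractionRing (valuationSubring v hna) K)

end Integers

section Translation

lemma max_natDegree_eq {R : Type*} [Semiring R] {p q : R[X]} {n : ℕ} (hp : p.natDegree ≤ n)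
    (hq : q.natDegree ≤ n) (hn : p.coeff n ≠ 0 ∨ q.coeff n ≠ 0) :
    max p.natDegree q.natDegree = n :=
  le_antisymm (max_le hp hq) <| le_max_iff.2 <|
    hn.imp le_natDegree_of_ne_zero le_natDegree_of_ne_zero

lemma coeff_max_natDegree_ne_zero {R : Type*} [Semiring R] {p q : R[X]} (h : p ≠ 0 ∨ q ≠ 0) :
    p.coeff (max p.natDegree q.natDegree) ≠ 0 ∨ q.coeff (max p.natDegree q.natDegree) ≠ 0 := by
  wlog hle : p.natDegree ≤ q.natDegree generalizing p q
  · simpa only [max_comm, or_comm] using this h.symm (le_of_not_ge hle)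
  rw [max_eq_right hle]
  rcases eq_or_ne q 0 with rfl | hq
  · have hp : p.natDegree = (0 : R[X]).natDegree := hle.antisymm (Nat.zero_le _)
    rw [← hp, coeff_natDegree, leadingCoeff_ne_zero]
    exact .inl (h.resolve_right fun h0 => h0 rfl)
  · exact .inr (leadingCoeff_ne_zero.2 hq)

lemma rmap_zero_ne_self {p : K[X]} (hp : IsCoprime p 0) (P : Option K) : rmap p 0 P ≠ P := by
  have hdeg : p.natDegree = 0 := natDegree_eq_zero_of_isUnit (isCoprime_zero_right.1 hp)
  rcases P with _ | z <;> simp [rmap, hdeg]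

lemma ne_zero_of_toMap_homogenizePair_ne_none {n : ℕ} {p q : K[X]} {P : Option K}
    (h : (homogenizePair n p q).toMap P ≠ none) : q ≠ 0 := by
  rintro rfl
  exact h (pt_eq_none_iff.2 (by simp [FormPair.eval, homogenizePair]))

variable {v : AbsoluteValue K ℝ} {hna : IsNonarchimedean (⇑v)} {F G : (vints v hna)[X]}

lemma exists_isGoodModel_of_goodRed (hrep : GoodRep v hna F G) (hred : GoodRed v hna F G)
    {σ : Matrix (Fin 2) (Fin 2) K} (hσ : σ.det ≠ 0) {φ : Option K → Option K}
    (h : Function.Semiconj (mobius σ) φ (rmap (liftp v hna F) (liftp v hna G)))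
    {P : Option K} (hP : φ P = P) :
    ∃ n Φ, IsGoodModel (Ideal.Quotient.mk (vmax v hna)) n Φ σ φ := by
  set n := max F.natDegree G.natDegree
  have hF : F.natDegree ≤ n := le_max_left _ _
  have hG : G.natDegree ≤ n := le_max_right _ _
  have hFK : (liftp v hna F).natDegree ≤ n := natDegree_map_le.trans hF
  have hGK : (liftp v hna G).natDegree ≤ n := natDegree_map_le.trans hG
  have hred_coeff := hred.2 ▸ coeff_max_natDegree_ne_zero hred.1.ne_zero_or_ne_zero
  have hlift_coeff : (liftp v hna F).coeff n ≠ 0 ∨ (liftp v hna G).coeff n ≠ 0 := by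
    simp only [liftp, redp, coeff_map] at hred_coeff ⊢
    exact hred_coeff.imp algebraMap_ne_zero_of_map_ne_zero algebraMap_ne_zero_of_map_ne_zero
  have hG0 : liftp v hna G ≠ 0 := by
    intro hG0
    refine rmap_zero_ne_self (hG0 ▸ hrep.1) (mobius σ P) ?_
    rw [← hG0, ← h P, hP]
  refine ⟨n, homogenizePair n F G, ⟨isHomogeneous_homogenizePair n F G, ?_, ?_⟩, hσ, ?_⟩
  · rw [map_homogenizePair]
    exact (isNondegenerate_homogenizePair_iff hFK hGK).2 ⟨hrep.1, hlift_coeff⟩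
  · rw [map_homogenizePair]
    exact (isNondegenerate_homogenizePair_iff (natDegree_map_le.trans hF)
      (natDegree_map_le.trans hG)).2 ⟨hred.1, hred_coeff⟩
  · rw [map_homogenizePair]
    exact rmap_eq_toMap hFK hGK hlift_coeff hG0 ▸ h

lemma HasGoodReduction.exists_goodRed {n : ℕ} {Φ : FormPair (vints v hna)}
    (hΦ : HasGoodReduction K (Ideal.Quotient.mk (vmax v hna)) n Φ) {P : Option K}
    (hP : (Φ.map (algebraMap _ K)).toMap P ≠ none) :
    ∃ F G : (vints v hna)[X], GoodRep v hna F G ∧ GoodRed v hna F G ∧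
      rmap (liftp v hna F) (liftp v hna G) = (Φ.map (algebraMap _ K)).toMap := by
  obtain ⟨F, G, hF, hG, rfl⟩ := hΦ.isHomogeneous.exists_homogenizePair_eq
  have hgeneric := hΦ.generic
  have hspecial := hΦ.special
  rw [map_homogenizePair] at hP hgeneric hspecial ⊢
  have hFK : (liftp v hna F).natDegree ≤ n := natDegree_map_le.trans hF
  have hGK : (liftp v hna G).natDegree ≤ n := natDegree_map_le.trans hG
  have hFk : (redp v hna F).natDegree ≤ n := natDegree_map_le.trans hF
  have hGk : (redp v hna G).natDegree ≤ n := natDegree_map_le.trans hG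
  obtain ⟨hcop, hcoeff⟩ := (isNondegenerate_homogenizePair_iff hFK hGK).1 hgeneric
  obtain ⟨hcop_red, hcoeff_red⟩ := (isNondegenerate_homogenizePair_iff hFk hGk).1 hspecial
  refine ⟨F, G, ⟨hcop, n, ?_⟩, ⟨hcop_red, ?_⟩,
    rmap_eq_toMap hFK hGK hcoeff (ne_zero_of_toMap_homogenizePair_ne_none hP)⟩
  · simpa only [redp, coeff_map, mk_vmax_ne_zero_iff] using hcoeff_red
  · refine (max_natDegree_eq hFk hGk hcoeff_red).trans (max_natDegree_eq hF hG ?_).symm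
    simp only [redp, coeff_map] at hcoeff_red
    exact hcoeff_red.imp (mt fun h => by rw [h, map_zero]) (mt fun h => by rw [h, map_zero])

end Translation

theorem pot_good_reduction_iff_indifferent_case_general {K : Type*} [Field K] [Infinite K]
    (v : AbsoluteValue K ℝ) (hna : IsNonarchimedean (⇑v))
    (f g : Polynomial K) (hcop : IsCoprime f g)
    (x : K) (hfix : rmap f g (some x) = some x)
    (hind : v (multiplier f g (some x)) = 1)
    (y₁ : Option K) (hy₁ : rmap f g y₁ = some x) (hne : y₁ ≠ some x)
    (y₂ : Option K) (hy₂ : rmap f g y₂ = y₁)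
    (a b c d : K) (hdet : a * d - b * c ≠ 0)
    (h0 : mob a b c d (some x) = some 0) (h1 : mob a b c d y₁ = some 1)
    (hinf : mob a b c d y₂ = none) :
    PotGoodRed v hna f g ↔
      ∃ F G : Polynomial (vints v hna), GoodRep v hna F G ∧ GoodRed v hna F G ∧
        rmap (liftp v hna F) (liftp v hna G) ∘ mob a b c d = mob a b c d ∘ rmap f g := by
  refine ⟨?_, fun h => ⟨a, b, c, d, hdet, h⟩⟩
  rintro ⟨a', b', c', d', hdet', F', G', hrep', hred', hconj'⟩
  rw [mob_eq_mobius hdet', eq_comm, ← Function.semiconj_iff_comp_eq] at hconj'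
  rw [mob_eq_mobius hdet] at h0 h1 hinf ⊢
  obtain ⟨n, Φ, hΦ⟩ := exists_isGoodModel_of_goodRed hrep' hred' (by simpa using hdet') hconj' hfix
  let u : vints v hna := ⟨multiplier f g (some x), hind.le⟩
  obtain ⟨Ψ, σ, hΨ, hσ0, hσ1, hσinf⟩ :=
    hΦ.exists_normalized hcop hfix (u := u) rfl (mk_vmax_ne_zero_iff.2 hind) hy₁ hne hy₂
  have hσ : mobius σ = mobius !![a, b; c, d] :=
    mobius_eq_of_three_points (by simpa using hdet) hσ0 hσ1 hσinf h0 h1 hinf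
  have hΨ0 : (Ψ.map (algebraMap _ K)).toMap (some 0) = some 0 := by
    rw [← hσ0, ← hΨ.semiconj, hfix]
  obtain ⟨F, G, hrep, hred, hrmap⟩ := hΨ.exists_goodRed (hΨ0.trans_ne (Option.some_ne_none 0))
  refine ⟨F, G, hrep, hred, ?_⟩
  rw [hrmap, ← hσ]
  exact hΨ.semiconj.comp_eq.symm

/-- Theorem, Case 1: let `φ = f/g` have degree `d ≥ 2` with an indifferent
fixed point `x`, let `y₁ ≠ x` be a preimage of `x`, `y₂ ∈ P¹(K)` a preimage of `y₁`, and let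
`h` be the Möbius transformation with `h(x) = 0`, `h(y₁) = 1`, `h(y₂) = ∞`.  Then `φ` has
potentially good reduction if and only if `ψ = h ∘ φ ∘ h⁻¹` has good reduction. -/
theorem pot_good_reduction_iff_indifferent_case {K : Type*} [Field K] [IsAlgClosed K]
    (v : AbsoluteValue K ℝ) (hna : IsNonarchimedean (⇑v))
    (f g : Polynomial K) (hcop : IsCoprime f g)
    (hdeg : 2 ≤ max f.natDegree g.natDegree)
    (x : K) (hfix : rmap f g (some x) = some x)
    (hind : v (multiplier f g (some x)) = 1)
    (y₁ : K) (hy₁ : rmap f g (some y₁) = some x) (hne : y₁ ≠ x)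
    (y₂ : Option K) (hy₂ : rmap f g y₂ = some y₁)
    (a b c d : K) (hdet : a * d - b * c ≠ 0)
    (h0 : mob a b c d (some x) = some 0) (h1 : mob a b c d (some y₁) = some 1)
    (hinf : mob a b c d y₂ = none) :
    PotGoodRed v hna f g ↔
      ∃ F G : Polynomial (vints v hna), GoodRep v hna F G ∧ GoodRed v hna F G ∧
        rmap (liftp v hna F) (liftp v hna G) ∘ mob a b c d = mob a b c d ∘ rmap f g :=
  pot_good_reduction_iff_indifferent_case_general v hna f g hcop x hfix hind (some y₁) hy₁
    (fun h => hne (Option.some.inj h)) y₂ hy₂ a b c d hdet h0 h1 hinf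

end PaperPGR
end
end
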